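/- arXiv:1706.00575 — 3 statements merged into one kernel-verified Lean document; each statement's English description precedes it below -/
import Mathlib

section
/- Let H be a finite connected simple graph whose vertex set admits a partition into three nonempty parts V₁, V₂, V₃ such that each part induces a connected subgraph of H and, for every pair i ≠ j, there are at least two edges of H with one endpoint in V_i and the other in V_j. Then for every finite simple graph G, the complement of the 2-subdivision of G is an H-graph, i.e., it admits an H-representation. -/
/-- The 2-subdivision of a graph `G`, given a fixed choice `l e`, `r e` of the two
endpoints of each edge `e`: every edge `e` is replaced by the path
`(l e, (e,0), (e,1), r e)` on two new internal vertices. -/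
def Subd2 {V : Type} (G : SimpleGraph V) (l r : G.edgeSet → V) :
    SimpleGraph (V ⊕ (G.edgeSet × Fin 2)) :=
  SimpleGraph.fromRel fun x y =>
    match x, y with
    | Sum.inl u, Sum.inr p => (u = l p.1 ∧ p.2 = 0) ∨ (u = r p.1 ∧ p.2 = 1)
    | Sum.inr p, Sum.inr q => p.1 = q.1 ∧ p.2 ≠ q.2
    | _, _ => False

/-- The subdivision of a graph `H` in which each edge `e` (with fixed endpoints
`l e` and `r e`) is replaced by a path from `l e` to `r e` with `n e` new internal
vertices (possibly zero, in which case the edge is kept as is). -/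
def SubdivOf {W : Type} (H : SimpleGraph W) (l r : H.edgeSet → W) (n : H.edgeSet → ℕ) :
    SimpleGraph (W ⊕ (Σ e : H.edgeSet, Fin (n e))) :=
  SimpleGraph.fromRel fun x y =>
    match x, y with
    | Sum.inl u, Sum.inl v => ∃ e : H.edgeSet, n e = 0 ∧ u = l e ∧ v = r e
    | Sum.inl u, Sum.inr p => (u = l p.1 ∧ (p.2 : ℕ) = 0) ∨ (u = r p.1 ∧ (p.2 : ℕ) + 1 = n p.1)
    | Sum.inr p, Sum.inr q => p.1 = q.1 ∧ (p.2 : ℕ) + 1 = (q.2 : ℕ)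
    | _, _ => False

/-- `G` is an `H`-graph: there is a subdivision `H'` of `H` and a family of nonempty
connected subsets of `V(H')` indexed by the vertices of `G` such that two distinct
vertices of `G` are adjacent iff the corresponding subsets intersect. -/
def IsHGraph {W V : Type} (H : SimpleGraph W) (G : SimpleGraph V) : Prop :=
  ∃ (l r : H.edgeSet → W) (_ : ∀ e : H.edgeSet, (e : Sym2 W) = s(l e, r e))
    (n : H.edgeSet → ℕ) (S : V → Set (W ⊕ (Σ e : H.edgeSet, Fin (n e)))),
    (∀ v, (S v).Nonempty) ∧
    (∀ v, ((SubdivOf H l r n).induce (S v)).Connected) ∧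
    (∀ u v : V, u ≠ v → (G.Adj u v ↔ (S u ∩ S v).Nonempty))

/-- There are at least two edges of `H` with one endpoint in `A` and the other in `B`. -/
def TwoCrossEdges {W : Type} (H : SimpleGraph W) (A B : Set W) : Prop :=
  ∃ e₁ e₂ : Sym2 W, e₁ ≠ e₂ ∧ e₁ ∈ H.edgeSet ∧ e₂ ∈ H.edgeSet ∧
    (∃ a ∈ A, ∃ b ∈ B, e₁ = s(a, b)) ∧ (∃ a ∈ A, ∃ b ∈ B, e₂ = s(a, b))

/-!
Orient the edges of `H` so that between any two parts there is an arc in each direction: this is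
what the two edges are for. Subdivide every edge `N` times and give each vertex `x` of the graph to
be represented a part `A` and a threshold `t x` on the edges leaving `A`: the set of `x` contains
`A`, the first `t x` interior vertices of each arc out of `A`, and all but the first `t x` of each
arc into `A`. Along an arc from the part of `x` to the part of `y`, the two sets meet iff
`t y < t x`; along the reverse arc, iff `t x < t y`. So the sets are disjoint iff the
thresholds agree, and vertices in the same part always meet.

The 2-subdivision is 3-coloured by the original vertices, the first and the second interior
vertices. Adjacency between two colour classes is equality of suitable labels, which
serve as thresholds.
-/

open Function

namespace SubdivOf

open SimpleGraph

variable {W : Type} {H : SimpleGraph W} {l r : H.edgeSet → W} {n : H.edgeSet → ℕ}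

theorem adj_inl_inl {e : H.edgeSet} (hn : n e = 0) (hne : l e ≠ r e) :
    (SubdivOf H l r n).Adj (.inl (l e)) (.inl (r e)) := by
  simp only [SubdivOf, fromRel_adj, ne_eq, Sum.inl.injEq]
  exact ⟨hne, .inl ⟨e, hn, rfl, rfl⟩⟩

theorem adj_inl_inr_zero {e : H.edgeSet} (hn : 0 < n e) :
    (SubdivOf H l r n).Adj (.inl (l e)) (.inr ⟨e, 0, hn⟩) := by
  simp [SubdivOf]

theorem adj_inl_inr_last {e : H.edgeSet} {k : ℕ} (hk : k + 1 = n e) :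
    (SubdivOf H l r n).Adj (.inl (r e)) (.inr ⟨e, k, by omega⟩) := by
  simp [SubdivOf, hk]

theorem adj_inr_inr_succ {e : H.edgeSet} {k : ℕ} (hk : k + 1 < n e) :
    (SubdivOf H l r n).Adj (.inr ⟨e, k, by omega⟩) (.inr ⟨e, k + 1, hk⟩) := by
  simp [SubdivOf]

variable {S : Set (W ⊕ (Σ e : H.edgeSet, Fin (n e)))}

theorem reachable_induce_of_initial_segment {e : H.edgeSet} (hl : .inl (l e) ∈ S) {k : ℕ}
    (hk : k < n e) (hS : ∀ j : Fin (n e), j ≤ k → .inr ⟨e, j⟩ ∈ S) :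
    ((SubdivOf H l r n).induce S).Reachable ⟨.inl (l e), hl⟩
      ⟨.inr ⟨e, k, hk⟩, hS ⟨k, hk⟩ le_rfl⟩ := by
  induction k with
  | zero => exact Adj.reachable (adj_inl_inr_zero hk)
  | succ k ih =>
    exact (ih (by omega) fun j hj => hS j (by omega)).trans
      (Adj.reachable (adj_inr_inr_succ (l := l) (r := r) hk))

theorem reachable_induce_of_final_segment {e : H.edgeSet} (hr : .inl (r e) ∈ S) {k : ℕ}
    (hk : k < n e) (hS : ∀ j : Fin (n e), k ≤ j → .inr ⟨e, j⟩ ∈ S) :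
    ((SubdivOf H l r n).induce S).Reachable ⟨.inl (r e), hr⟩
      ⟨.inr ⟨e, k, hk⟩, hS ⟨k, hk⟩ le_rfl⟩ := by
  obtain ⟨d, hd⟩ := Nat.exists_eq_add_of_lt hk
  induction d generalizing k with
  | zero => exact Adj.reachable (adj_inl_inr_last hd.symm)
  | succ d ih =>
    exact (ih (k := k + 1) (by omega) (fun j hj => hS j (by omega)) (by omega)).trans
      (Adj.reachable (adj_inr_inr_succ (l := l) (r := r) (by omega)).symm)

theorem reachable_induce_of_edge (hlr : ∀ e : H.edgeSet, (e : Sym2 W) = s(l e, r e))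
    {e : H.edgeSet} (hl : .inl (l e) ∈ S) (hr : .inl (r e) ∈ S)
    (hS : ∀ j : Fin (n e), .inr ⟨e, j⟩ ∈ S) :
    ((SubdivOf H l r n).induce S).Reachable ⟨.inl (l e), hl⟩ ⟨.inl (r e), hr⟩ := by
  rcases Nat.eq_zero_or_pos (n e) with hn | hn
  · have hadj : H.Adj (l e) (r e) := by
      rw [← mem_edgeSet, ← hlr e]
      exact e.2
    exact Adj.reachable (adj_inl_inl hn hadj.ne)
  · exact (reachable_induce_of_initial_segment hl hn fun j _ => hS j).trans
      (reachable_induce_of_final_segment hr hn fun j _ => hS j).symm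

/-- The set of vertices of the subdivision that represents a vertex assigned to the part `A` of `H`
with thresholds `t`: the branch vertices in `A`, the first `t e` interior vertices of each edge `e`
that starts in `A`, and all but the first `t e` interior vertices of each edge `e` that ends in
`A`. -/
def thresholdSet (l r : H.edgeSet → W) (n : H.edgeSet → ℕ) (A : Set W) (t : H.edgeSet → ℕ) :
    Set (W ⊕ (Σ e : H.edgeSet, Fin (n e))) :=
  {x | x.elim (· ∈ A) fun q => (l q.1 ∈ A ∧ q.2 < t q.1) ∨ (r q.1 ∈ A ∧ t q.1 ≤ q.2)}

variable {A B : Set W} {t u : H.edgeSet → ℕ}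

theorem inr_mem_thresholdSet {e : H.edgeSet} {k : Fin (n e)} :
    .inr ⟨e, k⟩ ∈ thresholdSet l r n A t ↔ (l e ∈ A ∧ k < t e) ∨ (r e ∈ A ∧ t e ≤ k) :=
  Iff.rfl

theorem reachable_induce_thresholdSet (hlr : ∀ e : H.edgeSet, (e : Sym2 W) = s(l e, r e))
    {a b : A} (hab : (H.induce A).Reachable a b) :
    ((SubdivOf H l r n).induce (thresholdSet l r n A t)).Reachable
      ⟨.inl a, a.2⟩ ⟨.inl b, b.2⟩ := by
  have edge {e : H.edgeSet} {x y : A} (hx : l e = x) (hy : r e = y) :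
      ((SubdivOf H l r n).induce (thresholdSet l r n A t)).Reachable
        ⟨.inl x, x.2⟩ ⟨.inl y, y.2⟩ := by
    obtain ⟨x, hxA⟩ := x
    obtain ⟨y, hyA⟩ := y
    obtain rfl : l e = x := hx
    obtain rfl : r e = y := hy
    exact reachable_induce_of_edge hlr hxA hyA fun j =>
      (lt_or_ge (j : ℕ) (t e)).imp (⟨hxA, ·⟩) (⟨hyA, ·⟩)
  obtain ⟨p⟩ := hab
  induction p with
  | nil => rfl
  | @cons x y _ hxy _ ih =>
    refine .trans ?_ ih
    obtain ⟨hx, hy⟩ | ⟨hx, hy⟩ := Sym2.eq_iff.1 (hlr ⟨s(x.1, y.1), hxy⟩)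
    · exact edge hx.symm hy.symm
    · exact (edge hy.symm hx.symm).symm

theorem connected_induce_thresholdSet (hlr : ∀ e : H.edgeSet, (e : Sym2 W) = s(l e, r e))
    (hA : (H.induce A).Connected) :
    ((SubdivOf H l r n).induce (thresholdSet l r n A t)).Connected := by
  obtain ⟨w⟩ := hA.nonempty
  refine (connected_iff_exists_forall_reachable _).2 ⟨⟨.inl w, w.2⟩, ?_⟩
  have branch (w' : A) := reachable_induce_thresholdSet (n := n) (t := t) hlr (hA w w')
  rintro ⟨w' | ⟨e, k, hk⟩, hx⟩
  · exact branch ⟨w', hx⟩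
  · obtain ⟨hl, hkt⟩ | ⟨hr, htk⟩ := inr_mem_thresholdSet.1 hx
    · exact (branch ⟨l e, hl⟩).trans <|
        reachable_induce_of_initial_segment hl hk fun j hj => .inl ⟨hl, hj.trans_lt hkt⟩
    · exact (branch ⟨r e, hr⟩).trans <|
        reachable_induce_of_final_segment hr hk fun j hj => .inr ⟨hr, htk.trans hj⟩

theorem thresholdSet_inter_nonempty_iff (hAB : Disjoint A B) (ht : ∀ e, t e ≤ n e)
    (hu : ∀ e, u e ≤ n e) :
    (thresholdSet l r n A t ∩ thresholdSet l r n B u).Nonempty ↔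
      ∃ e, (l e ∈ A ∧ r e ∈ B ∧ u e < t e) ∨ (l e ∈ B ∧ r e ∈ A ∧ t e < u e) := by
  constructor
  · rintro ⟨w | ⟨e, k⟩, hA, hB⟩
    · exact (hAB.notMem_of_mem_left hA hB).elim
    · refine ⟨e, ?_⟩
      obtain ⟨hA, htk⟩ | ⟨hA, htk⟩ := inr_mem_thresholdSet.1 hA <;>
        obtain ⟨hB, huk⟩ | ⟨hB, huk⟩ := inr_mem_thresholdSet.1 hB
      · exact (hAB.notMem_of_mem_left hA hB).elim
      · exact .inl ⟨hA, hB, huk.trans_lt htk⟩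
      · exact .inr ⟨hB, hA, htk.trans_lt huk⟩
      · exact (hAB.notMem_of_mem_left hA hB).elim
  · rintro ⟨e, ⟨hl, hr, hlt⟩ | ⟨hl, hr, hlt⟩⟩
    · exact ⟨.inr ⟨e, u e, hlt.trans_le (ht e)⟩, .inl ⟨hl, hlt⟩, .inr ⟨hr, le_rfl⟩⟩
    · exact ⟨.inr ⟨e, t e, hlt.trans_le (hu e)⟩, .inr ⟨hr, le_rfl⟩, .inl ⟨hl, hlt⟩⟩

end SubdivOf

/-- The unordered pairs with one element in `A` and the other in `B`. -/
def crossPairs {W : Type*} (A B : Set W) : Set (Sym2 W) :=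
  {e | ∃ a ∈ A, ∃ b ∈ B, e = s(a, b)}

section Parts

variable {W κ : Type*} {A : κ → Set W}

theorem sym2_eq_of_mem_crossPairs (hA : Pairwise (Disjoint on A)) {e : Sym2 W} {i j i' j' : κ}
    (h : e ∈ crossPairs (A i) (A j)) (h' : e ∈ crossPairs (A i') (A j')) :
    s(i, j) = s(i', j') := by
  obtain ⟨a, ha, b, hb, rfl⟩ := h
  obtain ⟨a', ha', b', hb', h⟩ := h'
  have eq_of_mem {i j : κ} {w : W} (hi : w ∈ A i) (hj : w ∈ A j) : i = j :=
    hA.eq (Set.not_disjoint_iff.2 ⟨w, hi, hj⟩)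
  obtain ⟨rfl, rfl⟩ | ⟨rfl, rfl⟩ := Sym2.eq_iff.1 h
  · rw [eq_of_mem ha ha', eq_of_mem hb hb']
  · rw [eq_of_mem ha hb', eq_of_mem hb ha', Sym2.eq_swap]

theorem eq_and_eq_of_mem_crossPairs [LinearOrder κ] (hA : Pairwise (Disjoint on A))
    {e : Sym2 W} {i j i' j' : κ} (hij : i < j) (hij' : i' < j')
    (h : e ∈ crossPairs (A i) (A j)) (h' : e ∈ crossPairs (A i') (A j')) :
    i = i' ∧ j = j' := by
  obtain h | ⟨rfl, rfl⟩ := Sym2.eq_iff.1 (sym2_eq_of_mem_crossPairs hA h h')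
  · exact h
  · exact (hij.asymm hij').elim

theorem exists_opposite_part (hA : Pairwise (Disjoint on A)) (i : κ) (e : Sym2 W) :
    ∃ k, ∀ j, e ∈ crossPairs (A i) (A j) → k = j := by
  by_cases he : ∃ k, e ∈ crossPairs (A i) (A k)
  · obtain ⟨k, hk⟩ := he
    exact ⟨k, fun j hj => Sym2.congr_right.1 (sym2_eq_of_mem_crossPairs hA hk hj)⟩
  · exact ⟨i, fun j hj => (he ⟨j, hj⟩).elim⟩

theorem exists_sorted_ends [LinearOrder κ] (hA : Pairwise (Disjoint on A)) (e : Sym2 W) :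
    ∃ x y, e = s(x, y) ∧ ∀ i j, i < j → e ∈ crossPairs (A i) (A j) → x ∈ A i ∧ y ∈ A j := by
  by_cases he : ∃ i j, i < j ∧ e ∈ crossPairs (A i) (A j)
  · obtain ⟨i, j, hij, hcross⟩ := he
    have ⟨a, ha, b, hb, h⟩ := hcross
    refine ⟨a, b, h, fun i' j' hij' hcross' => ?_⟩
    obtain ⟨rfl, rfl⟩ := eq_and_eq_of_mem_crossPairs hA hij hij' hcross hcross'
    exact ⟨ha, hb⟩
  · induction e with | _ x y
    exact ⟨x, y, rfl, fun i j hij hcross => (he ⟨i, j, hij, hcross⟩).elim⟩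

end Parts

section Representation

variable {W : Type} {H : SimpleGraph W} {κ : Type*} {A : κ → Set W}

instance : Std.Symm (TwoCrossEdges H) where
  symm := by
    rintro A B ⟨e₁, e₂, hne, he₁, he₂, ⟨a₁, ha₁, b₁, hb₁, h₁⟩, ⟨a₂, ha₂, b₂, hb₂, h₂⟩⟩
    exact ⟨e₁, e₂, hne, he₁, he₂, ⟨b₁, hb₁, a₁, ha₁, h₁.trans Sym2.eq_swap⟩,
      ⟨b₂, hb₂, a₂, ha₂, h₂.trans Sym2.eq_swap⟩⟩

theorem exists_orientation_of_twoCrossEdges (hA : Pairwise (Disjoint on A))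
    (hcross : Pairwise (TwoCrossEdges H on A)) :
    ∃ l r : H.edgeSet → W, (∀ e : H.edgeSet, (e : Sym2 W) = s(l e, r e)) ∧
      ∀ i j, i ≠ j → ∃ e, l e ∈ A i ∧ r e ∈ A j := by
  classical
  let _ : LinearOrder κ := linearOrderOfSTO WellOrderingRel
  choose e₁ e₂ hne he₁ he₂ hc₁ hc₂ using fun i j (h : i < j) => hcross h.ne
  choose x y hxy hmem using exists_sorted_ends hA
  let F : Set (Sym2 W) := {e | ∃ i j h, e = e₂ i j h}
  refine ⟨fun e => if ↑e ∈ F then y e else x e, fun e => if ↑e ∈ F then x e else y e,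
    fun e => ?_, fun i j hij => ?_⟩
  · dsimp only
    split_ifs
    · exact (hxy e).trans Sym2.eq_swap
    · exact hxy e
  · rcases hij.lt_or_gt with h | h
    · have hF : e₁ i j h ∉ F := by
        rintro ⟨i', j', h', heq⟩
        obtain ⟨rfl, rfl⟩ := eq_and_eq_of_mem_crossPairs hA h h' (hc₁ i j h) (heq ▸ hc₂ i' j' h')
        exact hne i j h heq
      exact ⟨⟨e₁ i j h, he₁ i j h⟩, by simpa only [if_neg hF] using hmem _ i j h (hc₁ i j h)⟩
    · have hF : e₂ j i h ∈ F := ⟨j, i, h, rfl⟩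
      exact ⟨⟨e₂ j i h, he₂ j i h⟩,
        by simpa only [if_pos hF] using (hmem _ j i h (hc₂ j i h)).symm⟩

theorem isHGraph_compl_of_labels {X : Type} {T : Type*} [Finite T]
    (hA : Pairwise (Disjoint on A)) (hconn : ∀ i, (H.induce (A i)).Connected)
    (hcross : Pairwise (TwoCrossEdges H on A)) {Γ : SimpleGraph X} (c : X → κ) (f : X → κ → T)
    (hΓ : ∀ x y, Γ.Adj x y ↔ c x ≠ c y ∧ f x (c y) = f y (c x)) :
    IsHGraph H Γᶜ := by
  obtain ⟨l, r, hlr, harc⟩ := exists_orientation_of_twoCrossEdges hA hcross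
  obtain ⟨N, ⟨φ⟩⟩ := Finite.exists_equiv_fin T
  choose opp hopp using exists_opposite_part hA
  let t (x : X) (e : H.edgeSet) : ℕ := φ (f x (opp (c x) e))
  have htN (x : X) (e : H.edgeSet) : t x e ≤ N := Fin.is_le'
  have ht {x y : X} {e : H.edgeSet} (hl : l e ∈ A (c x)) (hr : r e ∈ A (c y)) :
      t x e = φ (f x (c y)) ∧ t y e = φ (f y (c x)) := by
    simp only [t, hopp _ _ _ ⟨_, hl, _, hr, hlr e⟩,
      hopp _ _ _ ⟨_, hr, _, hl, (hlr e).trans Sym2.eq_swap⟩, and_self]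
  have hne (i : κ) : (A i).Nonempty := Set.nonempty_coe_sort.1 (hconn i).nonempty
  refine ⟨l, r, hlr, fun _ => N, fun x => SubdivOf.thresholdSet l r _ (A (c x)) (t x),
    fun x => (hne (c x)).imp' Sum.inl fun _ => id,
    fun x => SubdivOf.connected_induce_thresholdSet hlr (hconn _), fun x y hxy => ?_⟩
  rw [SimpleGraph.compl_adj, hΓ]
  by_cases hc : c x = c y
  · obtain ⟨w, hw⟩ := hne (c x)
    exact iff_of_true ⟨hxy, fun h => h.1 hc⟩ ⟨.inl w, hw, show w ∈ A (c y) from hc ▸ hw⟩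
  rw [SubdivOf.thresholdSet_inter_nonempty_iff (hA hc) (htN x) (htN y)]
  constructor
  · rintro ⟨-, hf⟩
    have hφ : φ (f x (c y)) ≠ φ (f y (c x)) := fun h => hf ⟨hc, φ.injective h⟩
    rcases hφ.lt_or_gt with hlt | hgt
    · obtain ⟨e, hl, hr⟩ := harc (c y) (c x) (Ne.symm hc)
      exact ⟨e, .inr ⟨hl, hr, by rwa [(ht hl hr).1, (ht hl hr).2]⟩⟩
    · obtain ⟨e, hl, hr⟩ := harc (c x) (c y) hc
      exact ⟨e, .inl ⟨hl, hr, by rwa [(ht hl hr).1, (ht hl hr).2]⟩⟩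
  · rintro ⟨e, ⟨hl, hr, hlt⟩ | ⟨hl, hr, hlt⟩⟩ <;> refine ⟨hxy, fun ⟨_, hf⟩ => hlt.ne ?_⟩ <;>
      rw [(ht hl hr).1, (ht hl hr).2, hf]

end Representation

theorem preimage_singleton_eq_preimage_singleton_apply_iff {α β : Type*} {g : α → β} {a : α}
    {b : β} : g ⁻¹' {b} = g ⁻¹' {g a} ↔ b = g a :=
  ⟨fun h => ((Set.ext_iff.1 h a).2 rfl).symm, fun h => by rw [h]⟩

namespace Subd2

variable {V : Type} {G : SimpleGraph V}

/-- The proper 3-colouring of the 2-subdivision by the original vertices, the first and the second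
interior vertices of the subdivided edges. -/
def color : V ⊕ (G.edgeSet × Fin 2) → Fin 3 :=
  Sum.elim (fun _ => 0) fun q => q.2.succ

/-- The label of a vertex of the 2-subdivision with respect to a colour class: vertices of
different colours are adjacent iff their labels with respect to each other's colour agree. An
original vertex is encoded by the set of edges it is the left (or right) end of, so that labels
range over a finite type as soon as `G` has finitely many edges. Labels with respect to a vertex's
own colour are junk values. -/
def label (l r : G.edgeSet → V) : V ⊕ (G.edgeSet × Fin 2) → Fin 3 → Set G.edgeSet
  | .inl v, i => if i = 1 then l ⁻¹' {v} else r ⁻¹' {v}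
  | .inr (e, i), 0 => if i = 0 then l ⁻¹' {l e} else r ⁻¹' {r e}
  | .inr (e, _), _ => {e}

theorem adj_iff (l r : G.edgeSet → V) (x y : V ⊕ (G.edgeSet × Fin 2)) :
    (Subd2 G l r).Adj x y ↔
      color x ≠ color y ∧ label l r x (color y) = label l r y (color x) := by
  rcases x with v | ⟨e, i⟩ <;> rcases y with w | ⟨e', j⟩
  · simp [Subd2, color]
  · fin_cases j <;>
      simp [Subd2, color, label, preimage_singleton_eq_preimage_singleton_apply_iff]
  · rw [SimpleGraph.adj_comm, ne_comm, eq_comm]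
    fin_cases i <;>
      simp [Subd2, color, label, preimage_singleton_eq_preimage_singleton_apply_iff]
  · fin_cases i <;> fin_cases j <;> simp [Subd2, color, label, eq_comm (a := e)]

end Subd2

theorem complSubd2_isHGraph_general {W : Type} (H : SimpleGraph W) (V1 V2 V3 : Set W)
    (h12 : Disjoint V1 V2) (h13 : Disjoint V1 V3) (h23 : Disjoint V2 V3)
    (hc1 : (H.induce V1).Connected) (hc2 : (H.induce V2).Connected)
    (hc3 : (H.induce V3).Connected)
    (he12 : TwoCrossEdges H V1 V2) (he13 : TwoCrossEdges H V1 V3)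
    (he23 : TwoCrossEdges H V2 V3)
    {V : Type} (G : SimpleGraph V) [Finite G.edgeSet] (l r : G.edgeSet → V)
    (_hlr : ∀ e : G.edgeSet, (e : Sym2 V) = s(l e, r e)) :
    IsHGraph H (Subd2 G l r)ᶜ := by
  have hdisj : Pairwise (Disjoint on ![V1, V2, V3]) := by
    simp [Std.Symm.pairwise_on, Fin.forall_fin_succ, h12, h13, h23]
  have hcross : Pairwise (TwoCrossEdges H on ![V1, V2, V3]) := by
    simp [Std.Symm.pairwise_on, Fin.forall_fin_succ, he12, he13, he23]
  have hconn (i : Fin 3) : (H.induce (![V1, V2, V3] i)).Connected := by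
    fin_cases i <;> assumption
  exact isHGraph_compl_of_labels hdisj hconn hcross Subd2.color (Subd2.label l r)
    (Subd2.adj_iff l r)

/-- If the vertex set of a finite connected graph `H` can be partitioned into three
nonempty parts, each inducing a connected subgraph, with at least two edges between
each pair of parts, then for every finite graph `G` the complement of the
2-subdivision of `G` is an `H`-graph. -/
theorem complSubd2_isHGraph {W : Type} [Fintype W] (H : SimpleGraph W)
    (hH : H.Connected) (V1 V2 V3 : Set W)
    (h1 : V1.Nonempty) (h2 : V2.Nonempty) (h3 : V3.Nonempty)
    (h12 : Disjoint V1 V2) (h13 : Disjoint V1 V3) (h23 : Disjoint V2 V3)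
    (hcover : V1 ∪ V2 ∪ V3 = Set.univ)
    (hc1 : (H.induce V1).Connected) (hc2 : (H.induce V2).Connected)
    (hc3 : (H.induce V3).Connected)
    (he12 : TwoCrossEdges H V1 V2) (he13 : TwoCrossEdges H V1 V3)
    (he23 : TwoCrossEdges H V2 V3)
    {V : Type} [Fintype V] (G : SimpleGraph V) (l r : G.edgeSet → V)
    (hlr : ∀ e : G.edgeSet, (e : Sym2 V) = s(l e, r e)) :
    IsHGraph H (Subd2 G l r)ᶜ :=
  complSubd2_isHGraph_general H V1 V2 V3 h12 h13 h23 hc1 hc2 hc3 he12 he13 he23 G l r hlr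
end

section
/- For every finite simple graph G, the complement of the 2-subdivision of G is a W₄-graph, where W₄ is the 4-wheel (a 4-cycle together with a hub vertex adjacent to all four cycle vertices). -/
/-- The 4-wheel: the 4-cycle `0-1-2-3-0` together with the hub `4` adjacent to all
four cycle vertices. -/
def W4 : SimpleGraph (Fin 5) :=
  SimpleGraph.fromEdgeSet
    {s(0, 1), s(1, 2), s(2, 3), s(3, 0), s(4, 0), s(4, 1), s(4, 2), s(4, 3)}

/-! In `Subd₂(G)` the original vertices, the vertices `(e, 0)` and the vertices `(e, 1)` form three
independent sets, and between any two of these sets adjacency is an equality: of an original vertex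
with an end of `e`, or of `e` with `e'`. So an intersection model of the complement has to test
inequality. If two vertex sets meet a subdivided edge in the part before a position `a` and the part
from a position `b` on, respectively, then they intersect there iff `b < a`; a second edge in the
opposite direction tests `a < b`, so together they test `a ≠ b`. Contracting two opposite rim edges
of the wheel leaves three bags, any two of which are joined by two edges, and the edges of the wheel
can be directed so that these two are always opposite. -/

section Cuts

variable {W : Type} {H : SimpleGraph W} {l r : H.edgeSet → W} {n : H.edgeSet → ℕ}

theorem reachable_left_of_forall_le_mem {S : Set (W ⊕ (Σ e : H.edgeSet, Fin (n e)))}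
    {e : H.edgeSet} {k : Fin (n e)} (hl : Sum.inl (l e) ∈ S) (hS : ∀ j ≤ k, Sum.inr ⟨e, j⟩ ∈ S) :
    ((SubdivOf H l r n).induce S).Reachable ⟨_, hl⟩ ⟨_, hS k le_rfl⟩ := by
  obtain ⟨k, hk⟩ := k
  induction k with
  | zero => exact SimpleGraph.Adj.reachable (by simp [SubdivOf])
  | succ k ih =>
    exact (ih (by omega) fun j hj => hS j (hj.trans (Fin.mk_le_mk.2 k.le_succ))).trans
      (SimpleGraph.Adj.reachable (by simp [SubdivOf]))

theorem reachable_right_of_forall_ge_mem {S : Set (W ⊕ (Σ e : H.edgeSet, Fin (n e)))}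
    {e : H.edgeSet} {k : Fin (n e)} (hr : Sum.inl (r e) ∈ S) (hS : ∀ j ≥ k, Sum.inr ⟨e, j⟩ ∈ S) :
    ((SubdivOf H l r n).induce S).Reachable ⟨_, hr⟩ ⟨_, hS k le_rfl⟩ := by
  obtain ⟨k, hk⟩ := k
  induction hd : n e - (k + 1) generalizing k with
  | zero =>
    have hlast : k + 1 = n e := by omega
    exact SimpleGraph.Adj.reachable (by simp [SubdivOf, hlast])
  | succ d ih =>
    exact (ih (k + 1) (by omega) (fun j hj => hS j ((Fin.mk_le_mk.2 k.le_succ).trans hj))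
      (by omega)).trans (SimpleGraph.Adj.reachable (by simp [SubdivOf]))

variable (l r) in
/-- The vertex set of a subdivision of `H` cut out by a set `C` of branch vertices and a position
`t e` on every edge `e`: it consists of `C`, the internal vertices of `e` before `t e` if `e` starts
in `C`, and those from `t e` on if `e` ends in `C`. In particular, it contains all of an edge with
both ends in `C`. -/
def cutSet (C : Set W) (t : ∀ e, Fin (n e)) : Set (W ⊕ (Σ e : H.edgeSet, Fin (n e))) :=
  {z | match z with
    | Sum.inl u => u ∈ C
    | Sum.inr ⟨e, k⟩ => (l e ∈ C ∧ k < t e) ∨ (r e ∈ C ∧ t e ≤ k)}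

theorem reachable_cutSet_of_adj (hlr : ∀ e : H.edgeSet, (e : Sym2 W) = s(l e, r e)) {C : Set W}
    (t : ∀ e, Fin (n e)) {u v : C} (huv : H.Adj u v) :
    ((SubdivOf H l r n).induce (cutSet l r C t)).Reachable ⟨Sum.inl u, u.2⟩ ⟨Sum.inl v, v.2⟩ := by
  have left_right (e : H.edgeSet) (hl : l e ∈ C) (hr : r e ∈ C) :
      ((SubdivOf H l r n).induce (cutSet l r C t)).Reachable
        ⟨Sum.inl (l e), hl⟩ ⟨Sum.inl (r e), hr⟩ := by
    have hmem (k : Fin (n e)) : Sum.inr ⟨e, k⟩ ∈ cutSet l r C t :=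
      (lt_or_ge k (t e)).imp (⟨hl, ·⟩) (⟨hr, ·⟩)
    exact (reachable_left_of_forall_le_mem (k := t e) hl fun k _ => hmem k).trans
      (reachable_right_of_forall_ge_mem hr fun k _ => hmem k).symm
  obtain ⟨u, hu⟩ := u
  obtain ⟨v, hv⟩ := v
  obtain ⟨e, he⟩ : ∃ e : H.edgeSet, (e : Sym2 W) = s(u, v) := ⟨⟨_, huv⟩, rfl⟩
  rw [hlr e] at he
  rcases Sym2.eq_iff.1 he with ⟨rfl, rfl⟩ | ⟨rfl, rfl⟩
  · exact left_right e hu hv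
  · exact (left_right e hv hu).symm

theorem induce_cutSet_connected (hlr : ∀ e : H.edgeSet, (e : Sym2 W) = s(l e, r e)) {C : Set W}
    (hC : (H.induce C).Connected) (t : ∀ e, Fin (n e)) :
    ((SubdivOf H l r n).induce (cutSet l r C t)).Connected := by
  have branch (u v : C) : ((SubdivOf H l r n).induce (cutSet l r C t)).Reachable
      ⟨Sum.inl u, u.2⟩ ⟨Sum.inl v, v.2⟩ := by
    have huv := hC.preconnected u v
    rw [SimpleGraph.reachable_iff_reflTransGen] at huv ⊢
    exact huv.lift' (fun w : C => (⟨Sum.inl w, w.2⟩ : cutSet l r C t)) fun a b hab =>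
      (SimpleGraph.reachable_iff_reflTransGen _ _).1 (reachable_cutSet_of_adj hlr t hab)
  obtain ⟨c⟩ := hC.nonempty
  refine (SimpleGraph.connected_iff_exists_forall_reachable _).2 ⟨⟨Sum.inl c, c.2⟩, ?_⟩
  rintro ⟨u | ⟨e, k⟩, hz⟩
  · exact branch c ⟨u, hz⟩
  · rcases hz with ⟨hl, hk⟩ | ⟨hr, hk⟩
    · exact (branch c ⟨_, hl⟩).trans
        (reachable_left_of_forall_le_mem hl fun j hj => Or.inl ⟨hl, hj.trans_lt hk⟩)
    · exact (branch c ⟨_, hr⟩).trans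
        (reachable_right_of_forall_ge_mem hr fun j hj => Or.inr ⟨hr, hk.trans hj⟩)

theorem cutSet_inter_nonempty_iff {C D : Set W} {s t : ∀ e, Fin (n e)} :
    (cutSet l r C s ∩ cutSet l r D t).Nonempty ↔
      (C ∩ D).Nonempty ∨ (∃ e, l e ∈ C ∧ r e ∈ D ∧ t e < s e) ∨
        ∃ e, l e ∈ D ∧ r e ∈ C ∧ s e < t e := by
  constructor
  · rintro ⟨u | ⟨e, k⟩, hC, hD⟩
    · exact Or.inl ⟨u, hC, hD⟩
    · rcases hC with ⟨hC, hs⟩ | ⟨hC, hs⟩ <;> rcases hD with ⟨hD, ht⟩ | ⟨hD, ht⟩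
      · exact Or.inl ⟨_, hC, hD⟩
      · exact Or.inr (Or.inl ⟨e, hC, hD, ht.trans_lt hs⟩)
      · exact Or.inr (Or.inr ⟨e, hD, hC, hs.trans_lt ht⟩)
      · exact Or.inl ⟨_, hC, hD⟩
  · rintro (⟨u, hC, hD⟩ | ⟨e, hC, hD, hts⟩ | ⟨e, hD, hC, hst⟩)
    · exact ⟨Sum.inl u, hC, hD⟩
    · exact ⟨Sum.inr ⟨e, t e⟩, Or.inl ⟨hC, hts⟩, Or.inr ⟨hD, le_rfl⟩⟩
    · exact ⟨Sum.inr ⟨e, s e⟩, Or.inr ⟨hC, le_rfl⟩, Or.inl ⟨hD, hst⟩⟩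

theorem isHGraph_of_cuts {X : Type} {G : SimpleGraph X}
    (hlr : ∀ e : H.edgeSet, (e : Sym2 W) = s(l e, r e)) (C : X → Set W)
    (hC : ∀ x, (H.induce (C x)).Connected) (t : X → ∀ e, Fin (n e))
    (hG : ∀ x y, x ≠ y → (G.Adj x y ↔ (C x ∩ C y).Nonempty ∨
      (∃ e, l e ∈ C x ∧ r e ∈ C y ∧ t y e < t x e) ∨
        ∃ e, l e ∈ C y ∧ r e ∈ C x ∧ t x e < t y e)) :
    IsHGraph H G := by
  refine ⟨l, r, hlr, n, fun x => cutSet l r (C x) (t x), fun x => ?_,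
    fun x => induce_cutSet_connected hlr (hC x) (t x),
    fun x y hxy => (hG x y hxy).trans cutSet_inter_nonempty_iff.symm⟩
  obtain ⟨c, hc⟩ := (hC x).nonempty
  exact ⟨Sum.inl c, hc⟩

end Cuts

/-- `G` is multipartite, with parts the fibers of `part`, and every vertex `x` holds a key for each
part such that two vertices in different parts are adjacent iff the keys they hold for each other's
part agree. The key that `x` holds for its own part is irrelevant. -/
def IsKeyedBy {X ι κ : Type*} (G : SimpleGraph X) (part : X → ι) (key : X → ι → κ) : Prop :=
  ∀ x y, G.Adj x y ↔ part x ≠ part y ∧ key x (part y) = key y (part x)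

theorem IsKeyedBy.comp_injective {X ι κ κ' : Type*} {G : SimpleGraph X} {part : X → ι}
    {key : X → ι → κ} (hG : IsKeyedBy G part key) {φ : κ → κ'} (hφ : Function.Injective φ) :
    IsKeyedBy G part fun x a => φ (key x a) :=
  fun x y => by rw [hG x y, hφ.eq_iff]

open Classical in
/-- The value at which `x` cuts an edge `e` with exactly one end in its bag: its key for the part at
the other end. On the remaining edges the value is irrelevant. -/
noncomputable def keyCut {E W X ι κ : Type*} (l r : E → W) (bag : W → ι) (part : X → ι)
    (key : X → ι → κ) (x : X) (e : E) : κ :=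
  key x (if bag (l e) = part x then bag (r e) else bag (l e))

theorem exists_keyCut_lt_iff {E W X ι κ : Type*} [LT κ] {l r : E → W} {bag : W → ι} {part : X → ι}
    {key : X → ι → κ} {x y : X} (hne : part x ≠ part y)
    (hlink : ∃ e, bag (l e) = part x ∧ bag (r e) = part y) :
    (∃ e, bag (l e) = part x ∧ bag (r e) = part y ∧
        keyCut l r bag part key y e < keyCut l r bag part key x e) ↔
      key y (part x) < key x (part y) := by
  have cuts {e : E} (hl : bag (l e) = part x) (hr : bag (r e) = part y) :
      keyCut l r bag part key x e = key x (part y) ∧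
        keyCut l r bag part key y e = key y (part x) :=
    ⟨by rw [keyCut, if_pos hl, hr], by rw [keyCut, if_neg (hl ▸ hne), hl]⟩
  constructor
  · rintro ⟨e, hl, hr, hlt⟩
    rwa [(cuts hl hr).1, (cuts hl hr).2] at hlt
  · intro hlt
    obtain ⟨e, hl, hr⟩ := hlink
    exact ⟨e, hl, hr, by rwa [(cuts hl hr).1, (cuts hl hr).2]⟩

theorem IsKeyedBy.isHGraph_compl {W X : Type} {ι κ : Type*} [Finite κ] {H : SimpleGraph W}
    {l r : H.edgeSet → W} (hlr : ∀ e : H.edgeSet, (e : Sym2 W) = s(l e, r e)) {bag : W → ι}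
    (hbag : ∀ a, (H.induce (bag ⁻¹' {a})).Connected)
    (hlink : ∀ a b, a ≠ b → ∃ e, bag (l e) = a ∧ bag (r e) = b)
    {G : SimpleGraph X} {part : X → ι} {key : X → ι → κ} (hG : IsKeyedBy G part key) :
    IsHGraph H Gᶜ := by
  obtain ⟨N, ⟨φ⟩⟩ := Finite.exists_equiv_fin κ
  replace hG := hG.comp_injective φ.injective
  refine isHGraph_of_cuts (n := fun _ => N) hlr (fun x => bag ⁻¹' {part x}) (fun x => hbag _)
    (keyCut l r bag part fun x a => φ (key x a)) fun x y hxy => ?_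
  rw [SimpleGraph.compl_adj, hG x y]
  by_cases hpart : part x = part y
  · obtain ⟨⟨w, hw⟩⟩ := (hbag (part x)).nonempty
    exact iff_of_true ⟨hxy, fun h => h.1 hpart⟩ (Or.inl ⟨w, hw, hpart ▸ hw⟩)
  · have disjoint_bags : ¬(bag ⁻¹' {part x} ∩ bag ⁻¹' {part y}).Nonempty :=
      fun ⟨_, hx, hy⟩ => hpart (hx.symm.trans hy)
    simp only [Set.mem_preimage, Set.mem_singleton_iff]
    rw [or_iff_right disjoint_bags, exists_keyCut_lt_iff hpart (hlink _ _ hpart),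
      exists_keyCut_lt_iff (Ne.symm hpart) (hlink _ _ (Ne.symm hpart)), lt_or_lt_iff_ne]
    exact ⟨fun h hkey => h.2 ⟨hpart, hkey.symm⟩, fun h => ⟨hxy, fun hadj => h hadj.2.symm⟩⟩

theorem exists_orientation_of_coloring {W α : Type*} [LinearOrder α] {H : SimpleGraph W}
    (c : H.Coloring α) :
    ∃ l r : H.edgeSet → W, (∀ e : H.edgeSet, (e : Sym2 W) = s(l e, r e)) ∧
      ∀ p q, H.Adj p q → c p < c q → ∃ e, l e = p ∧ r e = q := by
  have increasing (e : H.edgeSet) : ∃ p q, (e : Sym2 W) = s(p, q) ∧ c p < c q := by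
    obtain ⟨⟨p, q⟩, hpq⟩ := e
    rcases lt_or_gt_of_ne (c.valid hpq) with hlt | hgt
    · exact ⟨p, q, rfl, hlt⟩
    · exact ⟨q, p, Sym2.eq_swap, hgt⟩
  choose l r hlr hlt using increasing
  refine ⟨l, r, hlr, fun p q hpq hc => ?_⟩
  obtain ⟨e, he⟩ : ∃ e : H.edgeSet, (e : Sym2 W) = s(p, q) := ⟨⟨_, hpq⟩, rfl⟩
  rw [hlr e] at he
  rcases Sym2.eq_iff.1 he with ⟨hl, hr⟩ | ⟨rfl, rfl⟩
  · exact ⟨e, hl, hr⟩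
  · exact absurd (hlt e) hc.not_gt

/-- The three bags of the wheel: the hub (`none`) and two opposite rim edges. -/
def wheelBag : Fin 5 → Option (Fin 2) :=
  ![some 0, some 0, some 1, some 1, none]

instance W4.decidableRelAdj : DecidableRel W4.Adj :=
  inferInstanceAs (DecidableRel (SimpleGraph.fromEdgeSet _).Adj)

theorem induce_wheelBag_connected (a : Option (Fin 2)) :
    (W4.induce (wheelBag ⁻¹' {a})).Connected := by
  have fiber_eq_pair : ∀ a : Option (Fin 2), ∃ u v, (u = v ∨ W4.Adj u v) ∧
      ∀ w, wheelBag w = a ↔ w = u ∨ w = v := by decide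
  obtain ⟨u, v, huv, hfiber⟩ := fiber_eq_pair a
  have hpair : wheelBag ⁻¹' {a} = {u, v} := Set.ext hfiber
  rw [hpair]
  rcases huv with rfl | hadj
  · rw [Set.pair_eq_singleton]
    exact ⟨SimpleGraph.Preconnected.of_subsingleton⟩
  · exact SimpleGraph.induce_pair_connected_of_adj hadj

/-- Odd rim vertices come first, then the hub, then even rim vertices: this directs the edges
between any two bags both ways. -/
def wheelColoring : W4.Coloring (Fin 3) :=
  SimpleGraph.Coloring.mk ![2, 0, 2, 0, 1] (by decide)

theorem exists_adj_wheelBag : ∀ a b : Option (Fin 2), a ≠ b → ∃ p q, W4.Adj p q ∧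
    wheelColoring p < wheelColoring q ∧ wheelBag p = a ∧ wheelBag q = b := by
  decide

section Subd2

variable {V : Type} {G : SimpleGraph V}

/-- The part of a vertex of the 2-subdivision: `none` for the original vertices, `some s` for the
vertices `(e, s)`. -/
def subdPart : V ⊕ (G.edgeSet × Fin 2) → Option (Fin 2) :=
  Sum.elim (fun _ => none) fun p => some p.2

/-- The keys of the vertices of the 2-subdivision. An original vertex is its own key for both other
parts; the key of `(e, s)` is the end of `e` next to it for the part of the original vertices, and
the edge `e` for the remaining part. -/
def subdKey (l r : G.edgeSet → V) :
    V ⊕ (G.edgeSet × Fin 2) → Option (Fin 2) → V ⊕ G.edgeSet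
  | Sum.inl v, _ => Sum.inl v
  | Sum.inr (e, s), none => Sum.inl (![l e, r e] s)
  | Sum.inr (e, _), some _ => Sum.inr e

theorem isKeyedBy_subd2 (l r : G.edgeSet → V) :
    IsKeyedBy (Subd2 G l r) subdPart (subdKey l r) := by
  rintro (u | ⟨e, s⟩) (v | ⟨e', s'⟩)
  · simp [Subd2, subdPart]
  · fin_cases s' <;> simp [Subd2, subdPart, subdKey]
  · fin_cases s <;> simp [Subd2, subdPart, subdKey, eq_comm]
  · have same_edge : (Subd2 G l r).Adj (Sum.inr (e, s)) (Sum.inr (e', s')) ↔ s ≠ s' ∧ e = e' := by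
      simp only [Subd2, SimpleGraph.fromRel_adj]
      grind
    simpa [subdPart, subdKey] using same_edge

end Subd2

/-- For every finite graph `G`, the complement of the 2-subdivision of `G` is a
`W₄`-graph. -/
theorem complSubd2_isW4Graph {V : Type} [Fintype V] (G : SimpleGraph V)
    (l r : G.edgeSet → V)
    (hlr : ∀ e : G.edgeSet, (e : Sym2 V) = s(l e, r e)) :
    IsHGraph W4 (Subd2 G l r)ᶜ := by
  obtain ⟨l', r', hlr', hforward⟩ := exists_orientation_of_coloring wheelColoring
  refine (isKeyedBy_subd2 l r).isHGraph_compl hlr' induce_wheelBag_connected fun a b hab => ?_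
  obtain ⟨p, q, hpq, hlt, rfl, rfl⟩ := exists_adj_wheelBag a b hab
  obtain ⟨e, rfl, rfl⟩ := hforward p q hpq hlt
  exact ⟨e, rfl, rfl⟩
end

section
/- Graph isomorphism is closed under the 2-subdivision operation: two finite simple graphs G and G′ are isomorphic if and only if their 2-subdivisions Subd₂(G) and Subd₂(G′) are isomorphic. -/
/-!
The internal vertices of the 2-subdivision of `G` correspond to the darts of `G`, the vertex next
to `u` on the edge `uv` being the dart from `u` to `v`. This makes the subdivision independent of
the choice of endpoints and shows that isomorphic graphs have isomorphic subdivisions.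

Conversely, an isomorphism `φ` of subdivisions need not send original vertices to original vertices
(rotate a cycle), but `v ↦ nearest (φ v)`, where `nearest` sends a dart to its source, is an
isomorphism of the original graphs. Its inverse comes from `φ⁻¹` in the same way: if `φ v` is a
dart with source `w`, then `φ⁻¹ w` is adjacent to `v`, hence a dart with source `v`. It preserves
adjacency because `φ` takes the path of length three replacing an edge to a non-backtracking walk
of length three, and any such walk traverses exactly one middle edge of a subdivided edge.
-/

open SimpleGraph

section DartSubdivision

variable {V W : Type*} {G : SimpleGraph V} {H : SimpleGraph W}

/-- The 2-subdivision of `G` with the darts of `G` as internal vertices: the edge `uv` is replaced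
by the path `u, (u, v), (v, u), v`. It involves no choice of endpoints. -/
def dartSubdivision (G : SimpleGraph V) : SimpleGraph (V ⊕ G.Dart) where
  Adj
    | Sum.inl _, Sum.inl _ => False
    | Sum.inl u, Sum.inr d => d.fst = u
    | Sum.inr d, Sum.inl u => d.fst = u
    | Sum.inr d, Sum.inr e => d.symm = e
  symm := ⟨by
    rintro (u | d) (v | e) h
    exacts [h, h, h, h ▸ d.symm_symm]⟩
  loopless := ⟨by
    rintro (u | d) h
    exacts [h, d.symm_ne h]⟩

namespace dartSubdivision

@[simp]
theorem not_adj_inl_inl {u v : V} : ¬ (dartSubdivision G).Adj (Sum.inl u) (Sum.inl v) :=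
  id

@[simp]
theorem adj_inl_inr {u : V} {d : G.Dart} :
    (dartSubdivision G).Adj (Sum.inl u) (Sum.inr d) ↔ d.fst = u :=
  Iff.rfl

@[simp]
theorem adj_inr_inl {u : V} {d : G.Dart} :
    (dartSubdivision G).Adj (Sum.inr d) (Sum.inl u) ↔ d.fst = u :=
  Iff.rfl

@[simp]
theorem adj_inr_inr {d e : G.Dart} :
    (dartSubdivision G).Adj (Sum.inr d) (Sum.inr e) ↔ d.symm = e :=
  Iff.rfl

theorem adj_inl_iff {u : V} {x : V ⊕ G.Dart} :
    (dartSubdivision G).Adj (Sum.inl u) x ↔ ∃ d : G.Dart, d.fst = u ∧ x = Sum.inr d := by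
  cases x <;> simp

theorem adj_inr_iff {d : G.Dart} {x : V ⊕ G.Dart} :
    (dartSubdivision G).Adj (Sum.inr d) x ↔ x = Sum.inl d.fst ∨ x = Sum.inr d.symm := by
  cases x <;> simp [eq_comm]

/-- The bijection between the darts of isomorphic graphs. -/
def dartEquiv (f : G ≃g H) : G.Dart ≃ H.Dart where
  toFun := f.toHom.mapDart
  invFun := f.symm.toHom.mapDart
  left_inv d := Dart.ext _ _ (Prod.ext (f.symm_apply_apply d.fst) (f.symm_apply_apply d.snd))
  right_inv d := Dart.ext _ _ (Prod.ext (f.apply_symm_apply d.fst) (f.apply_symm_apply d.snd))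

/-- The isomorphism of 2-subdivisions induced by an isomorphism of graphs. -/
def mapIso (f : G ≃g H) : dartSubdivision G ≃g dartSubdivision H where
  toEquiv := f.toEquiv.sumCongr (dartEquiv f)
  map_rel_iff' := by
    rintro (u | d) (v | e)
    · exact Iff.rfl
    · exact f.injective.eq_iff (a := e.fst) (b := u)
    · exact f.injective.eq_iff (a := d.fst) (b := v)
    · exact (dartEquiv f).injective.eq_iff (a := d.symm) (b := e)

/-- The original vertex nearest to a vertex of the 2-subdivision. -/
def nearest : V ⊕ G.Dart → V :=
  Sum.elim id (·.fst)

@[simp]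
theorem nearest_inl (v : V) : nearest (Sum.inl v : V ⊕ G.Dart) = v :=
  rfl

@[simp]
theorem nearest_inr (d : G.Dart) : nearest (Sum.inr d) = d.fst :=
  rfl

theorem adj_nearest_of_adj_of_adj_of_adj {x y z t : V ⊕ G.Dart}
    (hxy : (dartSubdivision G).Adj x y) (hyz : (dartSubdivision G).Adj y z)
    (hzt : (dartSubdivision G).Adj z t) (hxz : x ≠ z) (hyt : y ≠ t) :
    G.Adj (nearest x) (nearest t) := by
  rcases y with u | d
  · obtain ⟨d, rfl, rfl⟩ := adj_inl_iff.1 hyz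
    obtain ⟨c, hcd, rfl⟩ := adj_inl_iff.1 hxy.symm
    obtain rfl : t = Sum.inr d.symm := (adj_inr_iff.1 hzt).resolve_left hyt.symm
    simpa only [nearest_inr, hcd] using! d.adj
  · rcases adj_inr_iff.1 hyz with rfl | rfl
    · obtain rfl : x = Sum.inr d.symm := (adj_inr_iff.1 hxy.symm).resolve_left hxz
      obtain ⟨e, hed, rfl⟩ := adj_inl_iff.1 hzt
      simpa only [nearest_inr, hed] using! d.symm.adj
    · obtain rfl : x = Sum.inl d.fst := (adj_inr_iff.1 hxy.symm).resolve_right hxz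
      obtain rfl : t = Sum.inl d.snd :=
        (adj_inr_iff.1 hzt).resolve_right (d.symm_symm.symm ▸ hyt.symm)
      exact d.adj

theorem adj_nearest_apply_of_adj (φ : dartSubdivision G ≃g dartSubdivision H) {u v : V}
    (huv : G.Adj u v) : H.Adj (nearest (φ (Sum.inl u))) (nearest (φ (Sum.inl v))) := by
  let d : G.Dart := ⟨(u, v), huv⟩
  have hu : (dartSubdivision G).Adj (Sum.inl u) (Sum.inr d) := adj_inl_inr.2 rfl
  have hd : (dartSubdivision G).Adj (Sum.inr d) (Sum.inr d.symm) := adj_inr_inr.2 rfl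
  have hv : (dartSubdivision G).Adj (Sum.inr d.symm) (Sum.inl v) := adj_inr_inl.2 rfl
  exact adj_nearest_of_adj_of_adj_of_adj (φ.map_adj_iff.2 hu) (φ.map_adj_iff.2 hd)
    (φ.map_adj_iff.2 hv) (φ.injective.ne Sum.inl_ne_inr) (φ.injective.ne Sum.inr_ne_inl)

theorem nearest_symm_apply_nearest_apply (φ : dartSubdivision G ≃g dartSubdivision H) (v : V) :
    nearest (φ.symm (Sum.inl (nearest (φ (Sum.inl v))))) = v := by
  rcases hv : φ (Sum.inl v) with w | d
  · rw [nearest_inl, ← hv, φ.symm_apply_apply, nearest_inl]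
  · have hadj : (dartSubdivision G).Adj (Sum.inl v) (φ.symm (Sum.inl d.fst)) := by
      rw [← φ.map_adj_iff, hv, φ.apply_symm_apply, adj_inr_inl]
    obtain ⟨e, he, hφ⟩ := adj_inl_iff.1 hadj
    rw [nearest_inr, hφ, nearest_inr, he]

theorem adj_nearest_apply_iff (φ : dartSubdivision G ≃g dartSubdivision H) {u v : V} :
    H.Adj (nearest (φ (Sum.inl u))) (nearest (φ (Sum.inl v))) ↔ G.Adj u v := by
  refine ⟨fun h => ?_, adj_nearest_apply_of_adj φ⟩
  simpa only [nearest_symm_apply_nearest_apply] using adj_nearest_apply_of_adj φ.symm h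

/-- The isomorphism of graphs induced by an isomorphism of their 2-subdivisions. The latter may
send an original vertex to an internal one, which is then replaced by its nearest original
vertex. -/
def isoOfIso (φ : dartSubdivision G ≃g dartSubdivision H) : G ≃g H where
  toFun v := nearest (φ (Sum.inl v))
  invFun w := nearest (φ.symm (Sum.inl w))
  left_inv := nearest_symm_apply_nearest_apply φ
  right_inv := nearest_symm_apply_nearest_apply φ.symm
  map_rel_iff' := adj_nearest_apply_iff φ

theorem nonempty_iso_iff :
    Nonempty (dartSubdivision G ≃g dartSubdivision H) ↔ Nonempty (G ≃g H) :=
  ⟨Nonempty.map isoOfIso, Nonempty.map mapIso⟩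

end dartSubdivision

end DartSubdivision

namespace Subd2

variable {V : Type} {G : SimpleGraph V} {l r : G.edgeSet → V}

/-- The dart corresponding to an internal vertex of `Subd2 G l r`: its source is the end next to
that vertex, so `(e, 0)` corresponds to `(l e, r e)` and `(e, 1)` to `(r e, l e)`. -/
def toDart (hlr : ∀ e : G.edgeSet, (e : Sym2 V) = s(l e, r e)) (p : G.edgeSet × Fin 2) : G.Dart :=
  let d : G.Dart := ⟨(l p.1, r p.1), G.mem_edgeSet.1 (hlr p.1 ▸ p.1.2)⟩
  if p.2 = 0 then d else d.symm

variable (hlr : ∀ e : G.edgeSet, (e : Sym2 V) = s(l e, r e))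

theorem symm_toDart (p : G.edgeSet × Fin 2) :
    (toDart hlr p).symm = toDart hlr (p.1, p.2.rev) := by
  obtain ⟨e, i⟩ := p
  fin_cases i
  exacts [rfl, Dart.symm_symm _]

theorem edge_toDart (p : G.edgeSet × Fin 2) : (toDart hlr p).edge = p.1 := by
  obtain ⟨e, i⟩ := p
  fin_cases i
  · exact (hlr e).symm
  · exact (Dart.edge_symm _).trans (hlr e).symm

theorem toDart_injective : Function.Injective (toDart hlr) := by
  rintro ⟨e, i⟩ ⟨f, j⟩ h
  obtain rfl : e = f := Subtype.ext (by simpa only [edge_toDart] using congrArg Dart.edge h)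
  fin_cases i <;> fin_cases j
  exacts [rfl, absurd h.symm (Dart.symm_ne _), absurd h (Dart.symm_ne _), rfl]

theorem toDart_surjective : Function.Surjective (toDart hlr) := by
  intro d
  let e : G.edgeSet := ⟨d.edge, d.edge_mem⟩
  rcases (dart_edge_eq_iff _ _).1 (edge_toDart hlr (e, 0)) with h | h
  · exact ⟨(e, 0), h⟩
  · exact ⟨(e, Fin.rev 0), by rw [← symm_toDart hlr (e, 0), h, Dart.symm_symm]⟩

theorem not_adj_inl_inl {u v : V} : ¬ (Subd2 G l r).Adj (Sum.inl u) (Sum.inl v) := by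
  simp [Subd2]

theorem adj_inl_inr_iff_fst_toDart {u : V} {p : G.edgeSet × Fin 2} :
    (Subd2 G l r).Adj (Sum.inl u) (Sum.inr p) ↔ (toDart hlr p).fst = u := by
  obtain ⟨e, i⟩ := p
  fin_cases i <;> simp [Subd2, toDart, eq_comm]

theorem adj_inr_inr_iff_eq_rev {p q : G.edgeSet × Fin 2} :
    (Subd2 G l r).Adj (Sum.inr p) (Sum.inr q) ↔ (p.1, p.2.rev) = q := by
  have rev_eq_iff : ∀ i j : Fin 2, i.rev = j ↔ i ≠ j := by decide
  simp only [Subd2, fromRel_adj, ne_eq, Sum.inr.injEq, Prod.ext_iff, rev_eq_iff]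
  grind

theorem adj_inr_inr_iff_symm_toDart {p q : G.edgeSet × Fin 2} :
    (Subd2 G l r).Adj (Sum.inr p) (Sum.inr q) ↔ (toDart hlr p).symm = toDart hlr q := by
  rw [symm_toDart, (toDart_injective hlr).eq_iff, adj_inr_inr_iff_eq_rev]

/-- The 2-subdivision does not depend on the choice of endpoints. -/
noncomputable def isoDartSubdivision : Subd2 G l r ≃g dartSubdivision G where
  toEquiv := (Equiv.refl V).sumCongr
    (Equiv.ofBijective (toDart hlr) ⟨toDart_injective hlr, toDart_surjective hlr⟩)
  map_rel_iff' := by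
    rintro (u | p) (v | q)
    · exact iff_of_false dartSubdivision.not_adj_inl_inl not_adj_inl_inl
    · exact (adj_inl_inr_iff_fst_toDart hlr).symm
    · exact (((Subd2 G l r).adj_comm _ _).trans (adj_inl_inr_iff_fst_toDart hlr)).symm
    · exact (adj_inr_inr_iff_symm_toDart hlr).symm

end Subd2

theorem iso_iff_subd2_iso_general {V V' : Type} (G : SimpleGraph V) (G' : SimpleGraph V')
    (l r : G.edgeSet → V)
    (hlr : ∀ e : G.edgeSet, (e : Sym2 V) = s(l e, r e))
    (l' r' : G'.edgeSet → V')
    (hlr' : ∀ e : G'.edgeSet, (e : Sym2 V') = s(l' e, r' e)) :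
    Nonempty (G ≃g G') ↔ Nonempty (Subd2 G l r ≃g Subd2 G' l' r') := by
  let i := Subd2.isoDartSubdivision hlr
  let i' := Subd2.isoDartSubdivision hlr'
  rw [← dartSubdivision.nonempty_iso_iff]
  exact ⟨Nonempty.map fun φ => (i.trans φ).trans i'.symm,
    Nonempty.map fun φ => (i.symm.trans φ).trans i'⟩

/-- Graph isomorphism is closed under the 2-subdivision operation: two finite graphs
are isomorphic iff their 2-subdivisions are isomorphic. -/
theorem iso_iff_subd2_iso {V V' : Type} [Fintype V] [Fintype V']
    (G : SimpleGraph V) (G' : SimpleGraph V')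
    (l r : G.edgeSet → V)
    (hlr : ∀ e : G.edgeSet, (e : Sym2 V) = s(l e, r e))
    (l' r' : G'.edgeSet → V')
    (hlr' : ∀ e : G'.edgeSet, (e : Sym2 V') = s(l' e, r' e)) :
    Nonempty (G ≃g G') ↔ Nonempty (Subd2 G l r ≃g Subd2 G' l' r') :=
  iso_iff_subd2_iso_general G G' l r hlr l' r' hlr'
end
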